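/- arXiv:2205.11153 — 4 statements merged into one kernel-verified Lean document; each statement's English description precedes it below -/
import Mathlib

section
/- Let W be a real n × r matrix, V a real m × r matrix, g : Fin r → ℝ → ℝ a family of univariate functions differentiable on ℝ, and let p : Fin N → ℝ^m be a family of N operating points. Define f : ℝ^m → ℝ^n by f(q) o = ∑_i W o i * g i (∑_ℓ V ℓ i * q ℓ), and define the three-way array 𝒥 : Fin n → Fin m → Fin N → ℝ by 𝒥 o ℓ k = (the (o,ℓ) entry of the Jacobian matrix of f at p k). Then 𝒥 admits the rank-r polyadic decomposition 𝒥 o ℓ k = ∑_{i=1}^r W o i * V ℓ i * G' k i, where G' k i = (deriv (g i)) (∑_ℓ V ℓ i * (p k) ℓ). -/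
/-- The Jacobian tensor of a decoupled function `f(p) = W g(Vᵀ p)`, stacked over
`N` operating points, admits the rank-`r` polyadic decomposition
`𝒥 o ℓ k = ∑ i, W o i * V ℓ i * G' k i` with `G' k i = (g i)'(z_i(p k))`. -/
theorem jacobian_tensor_polyadic_decomposition
    (n m r N : ℕ) (W : Matrix (Fin n) (Fin r) ℝ) (V : Matrix (Fin m) (Fin r) ℝ)
    (g : Fin r → ℝ → ℝ) (hg : ∀ i, Differentiable ℝ (g i))
    (p : Fin N → (Fin m → ℝ))
    (f : (Fin m → ℝ) → (Fin n → ℝ))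
    (hf : ∀ q o, f q o = ∑ i, W o i * g i (∑ ℓ, V ℓ i * q ℓ))
    (𝒥 : Fin n → Fin m → Fin N → ℝ)
    (h𝒥 : ∀ o ℓ k, 𝒥 o ℓ k = fderiv ℝ f (p k) (Pi.single ℓ 1) o)
    (G' : Matrix (Fin N) (Fin r) ℝ)
    (hG' : ∀ k i, G' k i = deriv (g i) (∑ ℓ, V ℓ i * p k ℓ)) :
    ∀ o ℓ k, 𝒥 o ℓ k = ∑ i, W o i * V ℓ i * G' k i := by
  intro o ℓ k
  let z : Fin r → ((Fin m → ℝ) →L[ℝ] ℝ) := fun i =>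
    ∑ l, V l i • ContinuousLinearMap.proj (R := ℝ) (φ := fun _ : Fin m => ℝ) l
  have hz : ∀ i q, z i q = ∑ l, V l i * q l := by
    intro i q
    simp [z]
  have hd : HasFDerivAt f (ContinuousLinearMap.pi fun o : Fin n =>
      ∑ i, W o i • (deriv (g i) (z i (p k)) • z i)) (p k) := by
    rw [hasFDerivAt_pi']
    intro o
    have h1 : HasFDerivAt (fun q => ∑ i, W o i * g i (z i q))
        (∑ i, W o i • (deriv (g i) (z i (p k)) • z i)) (p k) := by
      refine HasFDerivAt.fun_sum fun i _ => ?_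
      refine HasFDerivAt.const_mul ?_ _
      exact ((hg i _).hasDerivAt).comp_hasFDerivAt (p k) (z i).hasFDerivAt
    have h2 : (fun q => f q o) = fun q => ∑ i, W o i * g i (z i q) := by
      funext q
      simp only [hf, hz]
    rw [h2]
    exact h1
  have hs : ∀ i, z i (Pi.single ℓ 1) = V ℓ i := by
    intro i
    simp [hz, Pi.single_apply]
  rw [h𝒥, hd.fderiv]
  simp only [ContinuousLinearMap.pi_apply, ContinuousLinearMap.sum_apply,
    ContinuousLinearMap.smul_apply, smul_eq_mul, hs, hG', hz]
  exact Finset.sum_congr rfl fun i _ => by ring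
end

section
/- Let F : Fin r → Matrix (Fin N) (Fin N) ℝ be a family of r filters, let G be a real N × r matrix, let V be a real m × r matrix and W a real n × r matrix. Define the column-filtered matrix F ∘ G ∈ ℝ^{N×r} by (F ∘ G) k i = ∑_{k'} (F i) k k' * G k' i, the block-diagonal matrix blkdiag(F) ∈ ℝ^{(r·N)×(r·N)} by blkdiag(F) (i,k) (i',k') = (if i = i' then (F i) k k' else 0), and the Khatri-Rao product V ⊙ W ∈ ℝ^{(m·n)×r} by (V ⊙ W)(ℓ,o) i = V ℓ i * W o i. Then vec((F ∘ G)(V ⊙ W)ᵀ) = ((V ⊙ W) ⊗ I_N) · blkdiag(F) · vec(G); entrywise: for all ℓ, o, k, ((F ∘ G)(V ⊙ W)ᵀ) k (ℓ,o) = ∑_{i} ∑_{k''} V ℓ i * W o i * (F i) k k'' * G k'' i. -/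
open Kronecker

/-- Linearity of the filtered mode-3 model in `G`:
`vec((F ∘ G)(V ⊙ W)ᵀ) = ((V ⊙ W) ⊗ I_N) · blkdiag(F) · vec(G)`, entrywise
`((F ∘ G)(V ⊙ W)ᵀ) k (ℓ,o) = ∑ i, ∑ k'', V ℓ i * W o i * (F i) k k'' * G k'' i`. -/
theorem filtered_mode3_linear_in_G
    (N r m n : ℕ) (F : Fin r → Matrix (Fin N) (Fin N) ℝ)
    (G : Matrix (Fin N) (Fin r) ℝ)
    (V : Matrix (Fin m) (Fin r) ℝ) (W : Matrix (Fin n) (Fin r) ℝ)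
    (FG : Matrix (Fin N) (Fin r) ℝ)
    (hFG : ∀ k i, FG k i = ∑ k', F i k k' * G k' i)
    (krVW : Matrix (Fin m × Fin n) (Fin r) ℝ)
    (hkr : ∀ ℓo i, krVW ℓo i = V ℓo.1 i * W ℓo.2 i)
    (blkdiagF : Matrix (Fin r × Fin N) (Fin r × Fin N) ℝ)
    (hblk : ∀ ik i'k', blkdiagF ik i'k' =
      if ik.1 = i'k'.1 then F ik.1 ik.2 i'k'.2 else 0)
    (vecG : Fin r × Fin N → ℝ) (hvecG : ∀ ik, vecG ik = G ik.2 ik.1) :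
    ((fun x : (Fin m × Fin n) × Fin N => (FG * krVW.transpose) x.2 x.1) =
        ((krVW ⊗ₖ (1 : Matrix (Fin N) (Fin N) ℝ)) * blkdiagF).mulVec vecG) ∧
    ∀ (ℓ : Fin m) (o : Fin n) (k : Fin N),
      (FG * krVW.transpose) k (ℓ, o) =
        ∑ i, ∑ k'', V ℓ i * W o i * F i k k'' * G k'' i := by
  have key : ∀ (ℓ : Fin m) (o : Fin n) (k : Fin N),
      (FG * krVW.transpose) k (ℓ, o) =
        ∑ i, ∑ k'', V ℓ i * W o i * F i k k'' * G k'' i := by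
    intro ℓ o k
    rw [Matrix.mul_apply]
    refine Finset.sum_congr rfl fun i _ => ?_
    rw [Matrix.transpose_apply, hFG, hkr, Finset.sum_mul]
    refine Finset.sum_congr rfl fun k' _ => ?_
    ring
  have hB : ∀ i k, blkdiagF.mulVec vecG (i, k) = ∑ k', F i k k' * G k' i := by
    intro i k
    simp only [Matrix.mulVec, dotProduct, Fintype.sum_prod_type, hblk, hvecG, ite_mul, zero_mul]
    rw [Finset.sum_eq_single i]
    · simp
    · intro j _ hj
      simp [Ne.symm hj]
    · simp
  refine ⟨?_, key⟩
  funext x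
  obtain ⟨⟨ℓ, o⟩, k⟩ := x
  rw [← Matrix.mulVec_mulVec]
  simp only [key]
  rw [Matrix.mulVec, dotProduct, Fintype.sum_prod_type]
  refine Finset.sum_congr rfl fun i _ => ?_
  symm
  rw [Finset.sum_eq_single k]
  · rw [hB, Matrix.kroneckerMap_apply, Matrix.one_apply_eq, hkr, Finset.mul_sum]
    refine Finset.sum_congr rfl fun k' _ => ?_
    ring
  · intro j _ hj
    rw [Matrix.kroneckerMap_apply, Matrix.one_apply_ne (Ne.symm hj)]
    simp
  · simp
end

section
/- Let J be a real N × (m·n) matrix (indexed by Fin N and Fin m × Fin n), let F_t : Fin r → Matrix (Fin N) (Fin N) ℝ for t = 1,…,s be s families of filters, let G be a real N × r matrix, V a real m × r matrix and W a real n × r matrix. Then ∑_{t=1}^s ‖J − (F_t ∘ G)(V ⊙ W)ᵀ‖_F² = ‖b − K · vec(G)‖₂², where b ∈ ℝ^{s·m·n·N} is the s-fold vertical stack of vec(J), and K ∈ ℝ^{(s·m·n·N)×(r·N)} is the vertical stack of the blocks K_t = ((V ⊙ W) ⊗ I_N) · blkdiag(F_t). In particular the implicit-smoothness objective for updating G is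 a linear least-squares problem in vec(G). -/
open Kronecker

/-- The implicit-smoothness objective for updating `G` is a linear
least-squares problem in `vec(G)`:
`∑ t, ‖J − (F_t ∘ G)(V ⊙ W)ᵀ‖_F² = ‖b − K vec(G)‖₂²` where `b` is the `s`-fold
stack of `vec(J)` and `K` stacks the blocks `((V ⊙ W) ⊗ I_N) blkdiag(F_t)`. -/
theorem implicit_smoothness_objective_linear_in_G
    (s N m n r : ℕ) (J : Matrix (Fin N) (Fin m × Fin n) ℝ)
    (F : Fin s → Fin r → Matrix (Fin N) (Fin N) ℝ)
    (G : Matrix (Fin N) (Fin r) ℝ)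
    (V : Matrix (Fin m) (Fin r) ℝ) (W : Matrix (Fin n) (Fin r) ℝ)
    (FG : Fin s → Matrix (Fin N) (Fin r) ℝ)
    (hFG : ∀ t k i, FG t k i = ∑ k', F t i k k' * G k' i)
    (krVW : Matrix (Fin m × Fin n) (Fin r) ℝ)
    (hkr : ∀ ℓo i, krVW ℓo i = V ℓo.1 i * W ℓo.2 i)
    (blkdiagF : Fin s → Matrix (Fin r × Fin N) (Fin r × Fin N) ℝ)
    (hblk : ∀ t ik i'k', blkdiagF t ik i'k' =
      if ik.1 = i'k'.1 then F t ik.1 ik.2 i'k'.2 else 0)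
    (vecG : Fin r × Fin N → ℝ) (hvecG : ∀ ik, vecG ik = G ik.2 ik.1)
    (b : Fin s × ((Fin m × Fin n) × Fin N) → ℝ)
    (hb : ∀ row, b row = J row.2.2 row.2.1)
    (K : Matrix (Fin s × ((Fin m × Fin n) × Fin N)) (Fin r × Fin N) ℝ)
    (hK : ∀ row col, K row col =
      ((krVW ⊗ₖ (1 : Matrix (Fin N) (Fin N) ℝ)) * blkdiagF row.1) row.2 col) :
    (∑ t, ∑ k, ∑ ℓo, (J k ℓo - (FG t * krVW.transpose) k ℓo) ^ 2) =
      ∑ row, (b row - K.mulVec vecG row) ^ 2 := by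
  have h1 : ∀ t i k, (blkdiagF t).mulVec vecG (i, k) = FG t k i := by
    intro t i k
    simp only [Matrix.mulVec, dotProduct, Fintype.sum_prod_type, hblk, hvecG, hFG]
    rw [Finset.sum_eq_single i]
    · simp
    · intro j _ hj
      simp [hj.symm]
    · simp
  have h2 : ∀ t l k, K.mulVec vecG (t, (l, k)) = (FG t * krVW.transpose) k l := by
    intro t l k
    have h3 : K.mulVec vecG (t, (l, k)) =
        ((krVW ⊗ₖ (1 : Matrix (Fin N) (Fin N) ℝ)) * blkdiagF t).mulVec vecG (l, k) := by
      simp only [Matrix.mulVec, dotProduct, hK]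
    rw [h3, ← Matrix.mulVec_mulVec, Matrix.mul_apply]
    generalize hu : (blkdiagF t).mulVec vecG = u
    have hu' : ∀ i k, u (i, k) = FG t k i := by
      intro i k
      rw [← hu, h1]
    simp only [Matrix.mulVec, dotProduct, Fintype.sum_prod_type, Matrix.kroneckerMap_apply, hu',
      Matrix.transpose_apply]
    refine Finset.sum_congr rfl fun i _ => ?_
    simp [Matrix.one_apply, mul_comm]
  rw [Fintype.sum_prod_type]
  refine Finset.sum_congr rfl fun t _ => ?_
  rw [Fintype.sum_prod_type, Finset.sum_comm]
  refine Finset.sum_congr rfl fun l _ => Finset.sum_congr rfl fun k _ => ?_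
  rw [h2, hb]
end

section
/- Let J be a real N × (m·n) matrix (indexed by Fin N and Fin m × Fin n), let F_C, F_L, F_R : Fin r → Matrix (Fin N) (Fin N) ℝ be three families of filters, let G be a real N × r matrix, V a real m × r matrix, W a real n × r matrix, and λ ≥ 0. Then ‖J − (F_C ∘ G)(V ⊙ W)ᵀ‖_F² + λ · ‖(F_L ∘ G) − (F_R ∘ G)‖_F² = ‖b − K · vec(G)‖₂², where b is the vertical concatenation of vec(J) with the zero vector of length r·N, and K is the vertical stack of the two blocks ((V ⊙ W) ⊗ I_N) · blkdiag(F_C) and √λ · (blkdiag(F_L) − blkdiag(F_R)). In particular the regularized explicit-smoothness objective for updating G is a linear least-squares problem in vec(G). -/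
open Kronecker

/-- The regularized explicit-smoothness objective for updating `G` is a linear
least-squares problem in `vec(G)`:
`‖J − (F_C ∘ G)(V ⊙ W)ᵀ‖_F² + λ ‖(F_L ∘ G) − (F_R ∘ G)‖_F² = ‖b − K vec(G)‖₂²`,
where `b` stacks `vec(J)` over the zero vector and `K` stacks the blocks
`((V ⊙ W) ⊗ I_N) blkdiag(F_C)` and `√λ (blkdiag(F_L) − blkdiag(F_R))`. -/
theorem explicit_smoothness_objective_linear_in_G
    (N m n r : ℕ) (J : Matrix (Fin N) (Fin m × Fin n) ℝ)
    (FC FL FR : Fin r → Matrix (Fin N) (Fin N) ℝ)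
    (G : Matrix (Fin N) (Fin r) ℝ)
    (V : Matrix (Fin m) (Fin r) ℝ) (W : Matrix (Fin n) (Fin r) ℝ)
    (lam : ℝ) (hlam : 0 ≤ lam)
    (FCG FLG FRG : Matrix (Fin N) (Fin r) ℝ)
    (hFCG : ∀ k i, FCG k i = ∑ k', FC i k k' * G k' i)
    (hFLG : ∀ k i, FLG k i = ∑ k', FL i k k' * G k' i)
    (hFRG : ∀ k i, FRG k i = ∑ k', FR i k k' * G k' i)
    (krVW : Matrix (Fin m × Fin n) (Fin r) ℝ)
    (hkr : ∀ ℓo i, krVW ℓo i = V ℓo.1 i * W ℓo.2 i)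
    (blkdiagFC blkdiagFL blkdiagFR : Matrix (Fin r × Fin N) (Fin r × Fin N) ℝ)
    (hblkC : ∀ ik i'k', blkdiagFC ik i'k' =
      if ik.1 = i'k'.1 then FC ik.1 ik.2 i'k'.2 else 0)
    (hblkL : ∀ ik i'k', blkdiagFL ik i'k' =
      if ik.1 = i'k'.1 then FL ik.1 ik.2 i'k'.2 else 0)
    (hblkR : ∀ ik i'k', blkdiagFR ik i'k' =
      if ik.1 = i'k'.1 then FR ik.1 ik.2 i'k'.2 else 0)
    (vecG : Fin r × Fin N → ℝ) (hvecG : ∀ ik, vecG ik = G ik.2 ik.1)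
    (b : ((Fin m × Fin n) × Fin N) ⊕ (Fin r × Fin N) → ℝ)
    (hb1 : ∀ x : (Fin m × Fin n) × Fin N, b (Sum.inl x) = J x.2 x.1)
    (hb2 : ∀ y : Fin r × Fin N, b (Sum.inr y) = 0)
    (K : Matrix (((Fin m × Fin n) × Fin N) ⊕ (Fin r × Fin N)) (Fin r × Fin N) ℝ)
    (hK1 : ∀ x col, K (Sum.inl x) col =
      ((krVW ⊗ₖ (1 : Matrix (Fin N) (Fin N) ℝ)) * blkdiagFC) x col)
    (hK2 : ∀ y col, K (Sum.inr y) col =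
      Real.sqrt lam * (blkdiagFL - blkdiagFR) y col) :
    ((∑ k, ∑ ℓo, (J k ℓo - (FCG * krVW.transpose) k ℓo) ^ 2) +
        lam * ∑ k, ∑ i, (FLG k i - FRG k i) ^ 2) =
      ∑ row, (b row - K.mulVec vecG row) ^ 2 := by
  have key : ∀ (F : Fin r → Matrix (Fin N) (Fin N) ℝ) (FG : Matrix (Fin N) (Fin r) ℝ)
      (B : Matrix (Fin r × Fin N) (Fin r × Fin N) ℝ),
      (∀ k i, FG k i = ∑ k', F i k k' * G k' i) →
      (∀ ik i'k', B ik i'k' = if ik.1 = i'k'.1 then F ik.1 ik.2 i'k'.2 else 0) →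
      ∀ y, B.mulVec vecG y = FG y.2 y.1 := by
    intro F FG B h1 h2 y
    simp only [Matrix.mulVec, dotProduct, h1, h2, hvecG, Fintype.sum_prod_type, ite_mul, zero_mul]
    rw [Finset.sum_eq_single y.1]
    · simp
    · intro c _ hc
      simp [Ne.symm hc]
    · simp
  have e1 : ∀ x, K.mulVec vecG (Sum.inl x) = (FCG * krVW.transpose) x.2 x.1 := by
    intro x
    have h : K.mulVec vecG (Sum.inl x) =
        (((krVW ⊗ₖ (1 : Matrix (Fin N) (Fin N) ℝ)) * blkdiagFC).mulVec vecG) x := by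
      simp only [Matrix.mulVec, dotProduct, hK1]
    rw [h, ← Matrix.mulVec_mulVec, funext (key FC FCG blkdiagFC hFCG hblkC)]
    simp only [Matrix.mulVec, dotProduct, Fintype.sum_prod_type, Matrix.kroneckerMap_apply,
      Matrix.mul_apply, Matrix.transpose_apply, Matrix.one_apply]
    refine Finset.sum_congr rfl fun i _ => ?_
    simp [mul_comm]
  have e2 : ∀ y, K.mulVec vecG (Sum.inr y) = Real.sqrt lam * (FLG y.2 y.1 - FRG y.2 y.1) := by
    intro y
    rw [← key FL FLG blkdiagFL hFLG hblkL, ← key FR FRG blkdiagFR hFRG hblkR]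
    simp only [Matrix.mulVec, dotProduct, hK2, Matrix.sub_apply]
    rw [← Finset.sum_sub_distrib, Finset.mul_sum]
    exact Finset.sum_congr rfl fun i _ => by ring
  rw [Fintype.sum_sum_type]
  simp only [e1, e2, hb1, hb2, zero_sub, neg_sq, mul_pow, Real.sq_sqrt hlam]
  rw [← Finset.mul_sum, Fintype.sum_prod_type_right, Fintype.sum_prod_type_right]
end
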